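/- arXiv:2501.18725 — 8 statements merged into one kernel-verified Lean document; each statement's English description precedes it below -/
import Mathlib

section
/- Let (X, d) be a metric space, let o, z, w, z', w' ∈ X and let β ∈ (0,1) satisfy d(z, w) ≤ β · d(o, z). Set a = d(o, w)/(1+β). Assume z' lies between o and z at distance a from o, i.e. d(o, z') = a and d(o, z') + d(z', z) = d(o, z), and similarly d(o, w') = a and d(o, w') + d(w', w) = d(o, w). Then d(z', w') ≤ (4β/(1−β²)) · d(o, w). In particular, if β < 1/5 then d(z', w') ≤ a. -/
theorem dist_between_points_comparison {X : Type*} [MetricSpace X]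
    (o z w z' w' : X) (β : ℝ) (hβ0 : 0 < β) (hβ1 : β < 1)
    (h : dist z w ≤ β * dist o z)
    (a : ℝ) (ha : a = dist o w / (1 + β))
    (hz'dist : dist o z' = a) (hz'btw : dist o z' + dist z' z = dist o z)
    (hw'dist : dist o w' = a) (hw'btw : dist o w' + dist w' w = dist o w) :
    dist z' w' ≤ (4 * β / (1 - β ^ 2)) * dist o w ∧
      (β < 1 / 5 → dist z' w' ≤ a) := by
  have hW : dist o w = (1 + β) * a := by
    rw [ha]; field_simp
  have ha0 : 0 ≤ a := hz'dist ▸ dist_nonneg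
  have h1 : dist z' w' ≤ dist z' z + dist z w + dist w w' := dist_triangle4 _ _ _ _
  rw [dist_comm w w'] at h1
  have h2 : dist o z ≤ dist o w + dist z w := by
    have := dist_triangle o w z
    rwa [dist_comm w z] at this
  have hZ : (1 - β) * dist o z ≤ (1 + β) * a := by linarith
  have hD : dist z' w' ≤ (1 + β) * dist o z + (1 + β) * a - 2 * a := by linarith
  have key : (1 - β) * dist z' w' ≤ 4 * β * a := by
    have e1 := mul_le_mul_of_nonneg_left hD (by linarith : 0 ≤ 1 - β)
    have e2 := mul_le_mul_of_nonneg_left hZ (by linarith : 0 ≤ 1 + β)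
    linarith
  have hb : 0 < 1 - β := by linarith
  constructor
  · have e : (4 * β / (1 - β ^ 2)) * dist o w = 4 * β * a / (1 - β) := by
      have h3 : 1 - β ^ 2 = (1 - β) * (1 + β) := by ring
      have h4 : 1 + β ≠ 0 := by linarith
      rw [hW, h3]
      field_simp
    rw [e, le_div_iff₀ hb]
    linarith
  · intro hβ
    have h5 : 4 * β * a ≤ (1 - β) * a := mul_le_mul_of_nonneg_right (by linarith) ha0
    exact le_of_mul_le_mul_left (key.trans h5) hb
end

section
/- Let a, b, c be real numbers with a ≥ log 2, b > 0, c > 0, b/2 ≥ −log(sinh(1)/2), and suppose that sinh(1)/sinh(c) ≤ 2·sinh(b/2)/sinh(a). Then c ≥ a − b. -/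
theorem sinh_comparison_core (a b c : ℝ)
    (ha : Real.log 2 ≤ a) (hb : 0 < b) (hc : 0 < c)
    (hb2 : -Real.log (Real.sinh 1 / 2) ≤ b / 2)
    (h : Real.sinh 1 / Real.sinh c ≤ 2 * Real.sinh (b / 2) / Real.sinh a) :
    a - b ≤ c := by
  have hl : 0 < Real.log 2 := Real.log_pos (by norm_num)
  have hS : 0 < Real.sinh 1 := Real.sinh_pos_iff.2 one_pos
  have hsa : 0 < Real.sinh a := Real.sinh_pos_iff.2 (by linarith)
  have hsc : 0 < Real.sinh c := Real.sinh_pos_iff.2 hc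
  rw [div_le_div_iff₀ hsc hsa] at h
  have hA : 2 ≤ Real.exp a := (Real.log_le_iff_le_exp two_pos).1 ha
  have hx : 2 ≤ Real.sinh 1 * Real.exp (b / 2) := by
    have h1 := Real.exp_le_exp.2 hb2
    rw [Real.exp_neg, Real.exp_log (by positivity), inv_div, div_le_iff₀ hS] at h1
    linarith
  have h3 : 3 / 8 * Real.exp a ≤ Real.sinh a := by
    have h4 : Real.exp (-a) * Real.exp a = 1 := by rw [← Real.exp_add]; simp
    have := Real.exp_pos (-a)
    rw [Real.sinh_eq]
    nlinarith
  have h5 : 2 * Real.sinh (b / 2) ≤ Real.exp (b / 2) := by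
    have := Real.exp_pos (-(b / 2))
    rw [Real.sinh_eq]; linarith
  have h6 : Real.sinh c ≤ Real.exp c / 2 := by
    have := Real.exp_pos (-c)
    rw [Real.sinh_eq]; linarith
  have hxp := Real.exp_pos (b / 2)
  have hap := Real.exp_pos a
  have hcp := Real.exp_pos c
  have h7 : Real.sinh 1 * (3 / 8 * Real.exp a) ≤ Real.exp (b / 2) * (Real.exp c / 2) :=
    calc _ ≤ Real.sinh 1 * Real.sinh a := by gcongr
      _ ≤ _ := h
      _ ≤ _ := mul_le_mul h5 h6 hsc.le hxp.le
  have h8 := mul_le_mul_of_nonneg_right h7 hxp.le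
  have h9 := mul_le_mul_of_nonneg_right hx hap.le
  have h10 : Real.exp a ≤ Real.exp (b / 2 + b / 2 + c) := by
    rw [Real.exp_add, Real.exp_add]
    nlinarith
  have := Real.exp_le_exp.1 h10
  linarith
end

section
/- Let x > 0, λ ≥ 2, y ≥ 0 and ρ > 0 be real numbers, and define h(t) = (x(λ+1)t + x²(λ−1)) / ((λ−1)t + (λ+1)x). Then |h(y) − h(y+ρ)| ≤ (8 / (√λ · (y/x + 1)))² · ρ = 64ρ / (λ (y/x + 1)²). -/
theorem mobius_contraction_case_I (x lam y ρ : ℝ)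
    (hx : 0 < x) (hlam : 2 ≤ lam) (hy : 0 ≤ y) (hρ : 0 < ρ)
    (h : ℝ → ℝ)
    (hh : ∀ t : ℝ, h t = (x * (lam + 1) * t + x ^ 2 * (lam - 1)) /
        ((lam - 1) * t + (lam + 1) * x)) :
    |h y - h (y + ρ)| ≤ (8 / (Real.sqrt lam * (y / x + 1))) ^ 2 * ρ ∧
    (8 / (Real.sqrt lam * (y / x + 1))) ^ 2 * ρ = 64 * ρ / (lam * (y / x + 1) ^ 2) := by
  have hl : 0 < lam := by linarith
  have key : (8 / (Real.sqrt lam * (y / x + 1))) ^ 2 * ρ = 64 * ρ / (lam * (y / x + 1) ^ 2) := by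
    rw [div_pow, mul_pow, Real.sq_sqrt hl.le]
    ring
  refine ⟨?_, key⟩
  rw [key]
  have hs : 0 < lam / 2 * (y + x) := by positivity
  have h1 : lam / 2 * (y + x) ≤ (lam - 1) * y + (lam + 1) * x := by nlinarith
  have h2 : lam / 2 * (y + x) ≤ (lam - 1) * (y + ρ) + (lam + 1) * x := by nlinarith
  have p1 := hs.trans_le h1
  have p2 := hs.trans_le h2
  have e : h y - h (y + ρ) = -(4 * lam * x ^ 2 * ρ /
      (((lam - 1) * y + (lam + 1) * x) * ((lam - 1) * (y + ρ) + (lam + 1) * x))) := by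
    rw [hh, hh, div_sub_div _ _ p1.ne' p2.ne', ← neg_div]
    congr 1
    ring
  rw [e, abs_neg, abs_of_nonneg (by positivity)]
  have hyx : 0 < y + x := by positivity
  calc _ ≤ 4 * lam * x ^ 2 * ρ / ((lam / 2 * (y + x)) * (lam / 2 * (y + x))) := by gcongr
    _ = 16 * ρ / (lam * (y / x + 1) ^ 2) := by
      have : y / x + 1 = (y + x) / x := by field_simp
      rw [this]
      field_simp
      norm_num
    _ ≤ _ := by gcongr; norm_num
end

section
/- Let x ≥ 1, λ ≥ 6, y ≤ −3x and 0 < ρ ≤ 1 be real numbers, and define h(t) = (x(λ+1)t + x²(λ−1)) / ((λ−1)t + (λ+1)x). Then both denominators (λ−1)y + (λ+1)x and (λ−1)(y+ρ) + (λ+1)x are nonzero, and |h(y) − h(y+ρ)| ≤ (8 / (√λ · |y/x + 1|))² · ρ = 64ρ / (λ (y/x + 1)²). -/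
theorem mobius_contraction_case_II (x lam y ρ : ℝ)
    (hx : 1 ≤ x) (hlam : 6 ≤ lam) (hy : y ≤ -3 * x) (hρ0 : 0 < ρ) (hρ1 : ρ ≤ 1)
    (h : ℝ → ℝ)
    (hh : ∀ t : ℝ, h t = (x * (lam + 1) * t + x ^ 2 * (lam - 1)) /
        ((lam - 1) * t + (lam + 1) * x)) :
    ((lam - 1) * y + (lam + 1) * x ≠ 0 ∧ (lam - 1) * (y + ρ) + (lam + 1) * x ≠ 0) ∧
    |h y - h (y + ρ)| ≤ (8 / (Real.sqrt lam * |y / x + 1|)) ^ 2 * ρ ∧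
    (8 / (Real.sqrt lam * |y / x + 1|)) ^ 2 * ρ = 64 * ρ / (lam * (y / x + 1) ^ 2) := by
  have hx0 : 0 < x := by linarith
  have hl0 : 0 < lam := by linarith
  obtain ⟨u, hu⟩ : ∃ u, u = -(y + x) := ⟨_, rfl⟩
  have hyu : y = -u - x := by linarith
  have hu2 : 2 * x ≤ u := by linarith
  have hu0 : 0 < u := by linarith
  have hA : (lam - 2) * u ≤ -((lam - 1) * y + (lam + 1) * x) := by
    rw [hyu]; nlinarith
  have hB : (lam - 3) / 2 * u ≤ -((lam - 1) * (y + ρ) + (lam + 1) * x) := by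
    have : (lam - 1) * ρ ≤ (lam - 1) * (u / 2) :=
      mul_le_mul_of_nonneg_left (by linarith) (by linarith)
    rw [hyu]; nlinarith
  have hA1 : 0 < (lam - 2) * u := mul_pos (by linarith) hu0
  have hB1 : 0 < (lam - 3) / 2 * u := mul_pos (by linarith) hu0
  have hAB := mul_le_mul hA hB hB1.le (hA1.le.trans hA)
  have hd1 : (lam - 1) * y + (lam + 1) * x ≠ 0 := by intro h0; linarith
  have hd2 : (lam - 1) * (y + ρ) + (lam + 1) * x ≠ 0 := by intro h0; linarith
  have heq : (8 / (Real.sqrt lam * |y / x + 1|)) ^ 2 * ρ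
      = 64 * ρ / (lam * (y / x + 1) ^ 2) := by
    rw [div_pow, mul_pow, Real.sq_sqrt hl0.le, sq_abs]; ring
  refine ⟨⟨hd1, hd2⟩, ?_, heq⟩
  rw [heq]
  have hr : 64 * ρ / (lam * (y / x + 1) ^ 2) = 64 * ρ * x ^ 2 / (lam * u ^ 2) := by
    have : y / x + 1 = -u / x := by rw [hyu]; field_simp; ring
    rw [this]; field_simp
  have hdiff : h y - h (y + ρ) = -(4 * lam * x ^ 2 * ρ /
      (-((lam - 1) * y + (lam + 1) * x) * -((lam - 1) * (y + ρ) + (lam + 1) * x))) := by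
    rw [hh, hh, div_sub_div _ _ hd1 hd2, neg_mul_neg, ← neg_div]
    congr 1; ring
  have hP : 0 < -((lam - 1) * y + (lam + 1) * x) * -((lam - 1) * (y + ρ) + (lam + 1) * x) :=
    mul_pos (by linarith) (by linarith)
  rw [hr, hdiff, abs_neg, abs_of_nonneg (by positivity), div_le_div_iff₀ hP (by positivity)]
  have key : lam ^ 2 * u ^ 2 ≤
      16 * (-((lam - 1) * y + (lam + 1) * x) * -((lam - 1) * (y + ρ) + (lam + 1) * x)) := by
    have h1 : 0 ≤ (8 * (lam - 2) * (lam - 3) - lam ^ 2) * u ^ 2 :=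
      mul_nonneg (by nlinarith) (sq_nonneg u)
    linarith
  have h4 : 0 ≤ 4 * x ^ 2 * ρ := by positivity
  have := mul_le_mul_of_nonneg_left key h4
  linarith
end

section
/- For every nonzero integer i set x_i = sign(i)·2^{i²}, and for every integer j ≥ 1 set r_j = 2^{−j−2} and λ_j = 1 + (2·x_j² + 2·x_j·√(x_j² + r_j²)) / r_j², extended by λ_{−j} = λ_j. For nonzero integers i, j with |i| ≠ |j| define μ_{i,j} = 8 / (√(λ_{|j|}) · |x_i/x_j + 1|). Then for every integer k ≥ 2, the sum of μ_{i,j}^{1/k} over all pairs (i, j) of nonzero integers with |i| ≥ k+1, |j| ≥ k+1 and |i| ≠ |j| is at most 1. -/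
lemma mu_aux_lam (xx rr l : ℝ) (hx : 0 < xx) (hr : 0 < rr)
    (hl : l = 1 + (2 * xx ^ 2 + 2 * xx * Real.sqrt (xx ^ 2 + rr ^ 2)) / rr ^ 2) :
    2 * xx / rr ≤ Real.sqrt l := by
  apply Real.le_sqrt_of_sq_le
  have h1 : xx ≤ Real.sqrt (xx ^ 2 + rr ^ 2) := Real.le_sqrt_of_sq_le (by nlinarith)
  have h2 : (2 * xx / rr) ^ 2 = (4 * xx ^ 2) / rr ^ 2 := by ring
  rw [hl, h2]
  have h3 : (4 * xx ^ 2) / rr ^ 2 ≤ (2 * xx ^ 2 + 2 * xx * Real.sqrt (xx ^ 2 + rr ^ 2)) / rr ^ 2 := by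
    apply div_le_div_of_nonneg_right _ (by positivity)
    nlinarith
  linarith

lemma mu_aux_exp (k a b M : ℤ) (hk : 2 ≤ k) (hb : k + 1 ≤ b)
    (h : a + b + 1 ≤ 2 * M) : k * (2 + a + b - 2 * k) ≤ b - 1 + M ^ 2 := by
  nlinarith [sq_nonneg (M - k), mul_le_mul_of_nonneg_left h (by linarith : 0 ≤ k)]

lemma mu_aux_tsum :
    ∑' q : (Bool × ℕ) × (Bool × ℕ), (2⁻¹ : ENNReal) ^ 4 * ((2⁻¹) ^ q.1.2 * (2⁻¹) ^ q.2.2) = 1 := by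
  have h0 : ∑' q : Bool × ℕ, (2⁻¹ : ENNReal) ^ q.2 = 4 := by
    rw [ENNReal.tsum_prod (f := fun (_ : Bool) (n : ℕ) => (2⁻¹ : ENNReal) ^ n)]
    simp only [ENNReal.tsum_geometric, ENNReal.one_sub_inv_two, inv_inv, tsum_bool]
    norm_num
  rw [ENNReal.tsum_mul_left,
    ENNReal.tsum_prod (f := fun (p q : Bool × ℕ) => (2⁻¹ : ENNReal) ^ p.2 * (2⁻¹) ^ q.2)]
  simp only [ENNReal.tsum_mul_left, ENNReal.tsum_mul_right, h0]
  rw [← ENNReal.inv_pow, show (4 : ENNReal) * 4 = 2 ^ 4 by norm_num]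
  exact ENNReal.inv_mul_cancel (by simp) (by simp)

theorem mu_sum_le_one
    (x : ℤ → ℝ) (hx : ∀ i : ℤ, i ≠ 0 → x i = (if 0 < i then (1:ℝ) else -1) * (2:ℝ) ^ (i ^ 2))
    (r : ℤ → ℝ) (hr : ∀ j : ℤ, 1 ≤ j → r j = (2:ℝ) ^ (-j - 2))
    (lam : ℤ → ℝ)
    (hlam : ∀ j : ℤ, 1 ≤ j →
      lam j = 1 + (2 * (x j) ^ 2 + 2 * x j * Real.sqrt ((x j) ^ 2 + (r j) ^ 2)) / (r j) ^ 2)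
    (hlamneg : ∀ j : ℤ, 1 ≤ j → lam (-j) = lam j)
    (μ : ℤ → ℤ → ℝ)
    (hμ : ∀ i j : ℤ, i ≠ 0 → j ≠ 0 → |i| ≠ |j| →
      μ i j = 8 / (Real.sqrt (lam |j|) * |x i / x j + 1|))
    (k : ℤ) (hk : 2 ≤ k) :
    ∑' p : {p : ℤ × ℤ // k + 1 ≤ |p.1| ∧ k + 1 ≤ |p.2| ∧ |p.1| ≠ |p.2|},
        ENNReal.ofReal (μ p.1.1 p.1.2 ^ ((1 : ℝ) / (k : ℝ))) ≤ 1 := by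
  have habsx : ∀ i : ℤ, i ≠ 0 → |x i| = (2:ℝ) ^ (i ^ 2) := by
    intro i hi
    rw [hx i hi, abs_mul, abs_of_pos (by positivity : (0:ℝ) < 2 ^ (i ^ 2))]
    split_ifs <;> simp
  have hlow : ∀ b : ℤ, 1 ≤ b → (2:ℝ) ^ (b ^ 2 + b + 3) ≤ Real.sqrt (lam b) := by
    intro b hb
    have hxb : x b = (2:ℝ) ^ (b ^ 2) := by
      rw [hx b (by omega), if_pos (by omega), one_mul]
    have h := mu_aux_lam (x b) (r b) (lam b) (by rw [hxb]; positivity)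
      (by rw [hr b hb]; positivity) (hlam b hb)
    refine le_trans (le_of_eq ?_) h
    rw [hxb, hr b hb, eq_div_iff (by positivity), ← zpow_add₀ (by norm_num),
      ← zpow_one_add₀ (by norm_num)]
    congr 1
    ring
  have hnum : ∀ i j : ℤ, k + 1 ≤ |i| → k + 1 ≤ |j| → |i| ≠ |j| →
      (2:ℝ) ^ (max |i| |j| ^ 2 - |j| ^ 2 - 1) ≤ |x i / x j + 1| := by
    intro i j hi hj hij
    have hi0 : i ≠ 0 := by rintro rfl; simp at hi; omega
    have hj0 : j ≠ 0 := by rintro rfl; simp at hj; omega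
    have hy : |x i / x j| = (2:ℝ) ^ (|i| ^ 2 - |j| ^ 2) := by
      rw [abs_div, habsx i hi0, habsx j hj0, zpow_sub₀ (by norm_num), sq_abs, sq_abs]
    have htri1 : |x i / x j| - 1 ≤ |x i / x j + 1| := by
      have := abs_sub_abs_le_abs_sub (x i / x j) (-1)
      simpa using this
    have htri2 : 1 - |x i / x j| ≤ |x i / x j + 1| := by
      have := abs_sub_abs_le_abs_sub (-1) (x i / x j)
      rw [abs_sub_comm (-1 : ℝ)] at this
      simpa using this
    rcases lt_or_gt_of_ne hij with h | h
    · rw [max_eq_right h.le]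
      have h1 : |x i / x j| ≤ 2⁻¹ := by
        rw [hy, ← zpow_neg_one]
        apply zpow_le_zpow_right₀ (by norm_num)
        nlinarith
      have h2 : (2:ℝ) ^ (|j| ^ 2 - |j| ^ 2 - 1) = 2⁻¹ := by simp
      rw [h2]
      linarith
    · rw [max_eq_left h.le]
      have h1 : (2:ℝ) ≤ |x i / x j| := by
        rw [hy]
        conv_lhs => rw [← zpow_one (2:ℝ)]
        apply zpow_le_zpow_right₀ (by norm_num)
        nlinarith
      rw [zpow_sub_one₀ (by norm_num), ← hy]
      linarith
  have hmu : ∀ i j : ℤ, k + 1 ≤ |i| → k + 1 ≤ |j| → |i| ≠ |j| →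
      0 ≤ μ i j ∧ μ i j ≤ (2:ℝ) ^ (-(|j| - 1 + max |i| |j| ^ 2)) := by
    intro i j hi hj hij
    have hi0 : i ≠ 0 := by rintro rfl; simp at hi; omega
    have hj0 : j ≠ 0 := by rintro rfl; simp at hj; omega
    rw [hμ i j hi0 hj0 hij]
    refine ⟨by positivity, ?_⟩
    have h1 := hlow |j| (by omega)
    have h2 := hnum i j hi hj hij
    have h3 := mul_le_mul h1 h2 (by positivity) (by positivity)
    refine (div_le_div_of_nonneg_left (by norm_num) (by positivity) h3).trans (le_of_eq ?_)
    rw [div_eq_iff (by positivity), ← zpow_add₀ (by norm_num), ← zpow_add₀ (by norm_num),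
      show (8:ℝ) = 2 ^ (3:ℤ) by norm_num]
    congr 1
    ring
  let e : {p : ℤ × ℤ // k + 1 ≤ |p.1| ∧ k + 1 ≤ |p.2| ∧ |p.1| ≠ |p.2|} →
      (Bool × ℕ) × (Bool × ℕ) := fun p =>
    ((decide (0 < p.1.1), (|p.1.1| - k - 1).toNat), (decide (0 < p.1.2), (|p.1.2| - k - 1).toNat))
  have he : Function.Injective e := by
    have key : ∀ i i' : ℤ, k + 1 ≤ |i| → k + 1 ≤ |i'| → decide (0 < i) = decide (0 < i') →
        (|i| - k - 1).toNat = (|i'| - k - 1).toNat → i = i' := by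
      intro i i' h h' h1 h2
      rw [decide_eq_decide] at h1
      rcases abs_cases i with ⟨_, _⟩ | ⟨_, _⟩ <;> rcases abs_cases i' with ⟨_, _⟩ | ⟨_, _⟩ <;> omega
    rintro ⟨⟨i, j⟩, hi, hj, hij⟩ ⟨⟨i', j'⟩, hi', hj', hij'⟩ h
    simp only [e, Prod.mk.injEq] at h
    simp only [Subtype.mk.injEq, Prod.mk.injEq]
    exact ⟨key _ _ hi hi' h.1.1 h.1.2, key _ _ hj hj' h.2.1 h.2.2⟩
  rw [← mu_aux_tsum]
  refine le_trans (ENNReal.tsum_le_tsum ?_) (ENNReal.tsum_comp_le_tsum_of_injective he _)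
  rintro ⟨⟨i, j⟩, hi, hj, hij⟩
  simp only [e] at hi hj hij ⊢
  obtain ⟨h0, h1⟩ := hmu i j hi hj hij
  generalize hs : (|i| - k - 1).toNat = s
  generalize ht : (|j| - k - 1).toNat = t
  have hs' : |i| = s + k + 1 := by omega
  have ht' : |j| = t + k + 1 := by omega
  have hE := mu_aux_exp k |i| |j| (max |i| |j|) hk hj (by omega)
  lift k to ℕ using (by omega)
  have hb : μ i j ≤ ((2⁻¹ : ℝ) ^ (4 + (s + t))) ^ k := by
    refine h1.trans ?_
    rw [← pow_mul, inv_pow, ← zpow_natCast, ← zpow_neg]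
    apply zpow_le_zpow_right₀ (by norm_num)
    push_cast
    have : (k:ℤ) * (2 + |i| + |j| - 2 * k) = (4 + (s + t)) * k := by
      rw [hs', ht']; ring
    linarith
  have hk0 : k ≠ 0 := by omega
  have hfin : μ i j ^ ((1:ℝ) / ((k : ℤ) : ℝ)) ≤ (2⁻¹ : ℝ) ^ (4 + (s + t)) := by
    refine (Real.rpow_le_rpow h0 hb (by positivity)).trans (le_of_eq ?_)
    rw [one_div, Int.cast_natCast]
    exact Real.pow_rpow_inv_natCast (by positivity) hk0
  refine (ENNReal.ofReal_le_ofReal hfin).trans (le_of_eq ?_)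
  rw [ENNReal.ofReal_pow (by positivity), ENNReal.ofReal_inv_of_pos (by norm_num), pow_add, pow_add]
  simp
end

section
/- For all integers k ≥ 2 and i ≥ k+1, the series ∑_{j=i+1}^{∞} (2^{i²} + 2^{j²})^{−1/k} converges and its sum is at most (1/3) · 2^{−i²/k}. -/
theorem case_I_term (k i : ℤ) (hk : 2 ≤ k) (hi : k + 1 ≤ i) (n : ℕ) :
    ((2:ℝ) ^ (i ^ 2) + (2:ℝ) ^ ((i + 1 + n : ℤ) ^ 2)) ^ (-(1 : ℝ) / (k : ℝ))
      ≤ ((1 / 4) * (2:ℝ) ^ (-((i : ℝ) ^ 2) / (k : ℝ))) * (1 / 4 : ℝ) ^ n := by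
  have hkR : (2:ℝ) ≤ k := by exact_mod_cast hk
  have hiR : (k:ℝ) + 1 ≤ i := by exact_mod_cast hi
  have hk0 : (0:ℝ) < k := by linarith
  have hn : (0:ℝ) ≤ n := Nat.cast_nonneg n
  have hexp : -(1:ℝ) / k ≤ 0 := div_nonpos_of_nonpos_of_nonneg (by norm_num) hk0.le
  have h4 : (1 / 4 : ℝ) * (1 / 4 : ℝ) ^ n = (2:ℝ) ^ (-(2 * ((n:ℝ) + 1))) := by
    rw [Real.rpow_neg (by norm_num), Real.rpow_mul (by norm_num), ← Nat.cast_succ,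
      Real.rpow_natCast, ← pow_succ', ← inv_pow]
    norm_num
  calc _ ≤ ((2:ℝ) ^ ((i + 1 + n : ℤ) ^ 2)) ^ (-(1 : ℝ) / (k : ℝ)) := by
        apply Real.rpow_le_rpow_of_nonpos (by positivity) _ hexp
        have : (0:ℝ) < (2:ℝ) ^ (i ^ 2) := by positivity
        linarith
    _ = (2:ℝ) ^ (((i:ℝ) + 1 + n) ^ 2 * (-(1 : ℝ) / (k : ℝ))) := by
        rw [Real.rpow_mul (by norm_num), ← Real.rpow_intCast]
        push_cast
        rfl
    _ ≤ (2:ℝ) ^ (-((i : ℝ) ^ 2) / (k : ℝ) + -(2 * ((n:ℝ) + 1))) := by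
        apply Real.rpow_le_rpow_of_exponent_le (by norm_num)
        have : -((i : ℝ) ^ 2) / (k : ℝ) + -(2 * ((n:ℝ) + 1))
            - ((i:ℝ) + 1 + n) ^ 2 * (-(1 : ℝ) / (k : ℝ))
            = (2 * (i - k) * (n + 1) + (n + 1) ^ 2) / k := by
          field_simp
          ring
        have h2 : 0 ≤ (2 * ((i:ℝ) - k) * (n + 1) + (n + 1) ^ 2) / k := by
          have : 0 ≤ (i:ℝ) - k := by linarith
          positivity
        linarith
    _ = _ := by
        rw [Real.rpow_add (by norm_num), ← h4]
        ring

/-- Enumeration of the integers greater than `i`. -/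
def caseIEquiv (i : ℤ) : ℕ ≃ {j : ℤ // i < j} where
  toFun n := ⟨i + 1 + n, by omega⟩
  invFun j := ((j : ℤ) - i - 1).toNat
  left_inv n := by simp only []; omega
  right_inv j := by
    obtain ⟨j, hj⟩ := j
    apply Subtype.ext
    simp only []
    omega

theorem case_I_tail_estimate (k i : ℤ) (hk : 2 ≤ k) (hi : k + 1 ≤ i) :
    Summable (fun j : {j : ℤ // i < j} =>
      ((2:ℝ) ^ (i ^ 2) + (2:ℝ) ^ ((j : ℤ) ^ 2)) ^ (-(1 : ℝ) / (k : ℝ))) ∧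
    ∑' j : {j : ℤ // i < j},
        ((2:ℝ) ^ (i ^ 2) + (2:ℝ) ^ ((j : ℤ) ^ 2)) ^ (-(1 : ℝ) / (k : ℝ))
      ≤ (1 / 3) * (2:ℝ) ^ (-((i : ℝ) ^ 2) / (k : ℝ)) := by
  have hg : HasSum (fun n : ℕ =>
      ((1 / 4) * (2:ℝ) ^ (-((i : ℝ) ^ 2) / (k : ℝ))) * (1 / 4 : ℝ) ^ n)
      (((1 / 4) * (2:ℝ) ^ (-((i : ℝ) ^ 2) / (k : ℝ))) * (1 - 1 / 4 : ℝ)⁻¹) :=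
    (hasSum_geometric_of_lt_one (by norm_num) (by norm_num)).mul_left _
  have hs : Summable (fun n : ℕ =>
      ((2:ℝ) ^ (i ^ 2) + (2:ℝ) ^ ((i + 1 + n : ℤ) ^ 2)) ^ (-(1 : ℝ) / (k : ℝ))) :=
    Summable.of_nonneg_of_le (fun n => by positivity) (case_I_term k i hk hi) hg.summable
  refine ⟨(caseIEquiv i).summable_iff.mp hs, ?_⟩
  rw [← (caseIEquiv i).tsum_eq]
  calc _ ≤ _ := hs.tsum_le_tsum (case_I_term k i hk hi) hg.summable
    _ = _ := hg.tsum_eq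
    _ = _ := by ring
end

section
/- For all integers k ≥ 2 and i ≥ k+1, the series ∑_{j=i+1}^{∞} (2^{j²} − 2^{i²})^{−1/k} converges and its sum is at most (1/3) · 2^{−i²/k}. -/
/-- The integers above `i`, enumerated as `i + 1 + n`. -/
def tailEquiv (i : ℤ) : ℕ ≃ {j : ℤ // i < j} where
  toFun n := ⟨i + 1 + n, by omega⟩
  invFun j := (j.1 - i - 1).toNat
  left_inv n := by
    simp only
    omega
  right_inv j := by
    obtain ⟨j, hj⟩ := j
    apply Subtype.ext
    simp only
    omega

lemma term_bound (k i : ℤ) (hk : 2 ≤ k) (hi : k + 1 ≤ i) (n : ℕ) :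
    ((2:ℝ) ^ ((i + 1 + n : ℤ) ^ 2) - (2:ℝ) ^ (i ^ 2)) ^ (-(1 : ℝ) / (k : ℝ))
      ≤ ((2:ℝ) ^ (-((i : ℝ) ^ 2) / (k : ℝ)) * (1 / 4)) * (1 / 4 : ℝ) ^ n := by
  have hk0 : (0:ℝ) < k := by exact_mod_cast (by omega : 0 < k)
  have hn : (0:ℤ) ≤ n := Int.natCast_nonneg n
  have h1 : (2:ℝ) ^ (i ^ 2 + 2 * k * (n + 1) : ℤ) ≤
      (2:ℝ) ^ ((i + 1 + n : ℤ) ^ 2) - (2:ℝ) ^ (i ^ 2) := by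
    have ha : (2:ℝ) ^ (i ^ 2 + 2 * k * (n + 1) + 1 : ℤ) ≤ (2:ℝ) ^ ((i + 1 + n : ℤ) ^ 2) := by
      apply zpow_le_zpow_right₀ (by norm_num)
      nlinarith [mul_nonneg (by linarith : (0:ℤ) ≤ i - k - 1) (by linarith : (0:ℤ) ≤ (n:ℤ) + 1)]
    have hb : (2:ℝ) ^ (i ^ 2) ≤ (2:ℝ) ^ (i ^ 2 + 2 * k * (n + 1) : ℤ) := by
      apply zpow_le_zpow_right₀ (by norm_num)
      nlinarith [mul_nonneg (by linarith : (0:ℤ) ≤ k) (by linarith : (0:ℤ) ≤ (n:ℤ) + 1)]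
    rw [zpow_add_one₀ (by norm_num)] at ha
    linarith
  have h2 := Real.rpow_le_rpow_of_nonpos (z := -(1 : ℝ) / (k : ℝ)) (by positivity) h1
    (by rw [neg_div]; exact neg_nonpos.2 (by positivity))
  refine h2.trans (le_of_eq ?_)
  have h4 : (1 / 4 : ℝ) = (2:ℝ) ^ (-2 : ℝ) := by
    rw [Real.rpow_neg (by norm_num)]; norm_num
  rw [mul_assoc (_ ^ _ : ℝ) (1 / 4) _, ← pow_succ', h4, ← Real.rpow_natCast _ (n + 1), ← Real.rpow_mul (by norm_num),
    ← Real.rpow_add (by norm_num), ← Real.rpow_intCast 2 (i ^ 2 + 2 * k * (n + 1)), ← Real.rpow_mul (by norm_num)]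
  congr 1
  push_cast
  field_simp
  ring

theorem case_II_tail_estimate (k i : ℤ) (hk : 2 ≤ k) (hi : k + 1 ≤ i) :
    Summable (fun j : {j : ℤ // i < j} =>
      ((2:ℝ) ^ ((j : ℤ) ^ 2) - (2:ℝ) ^ (i ^ 2)) ^ (-(1 : ℝ) / (k : ℝ))) ∧
    ∑' j : {j : ℤ // i < j},
        ((2:ℝ) ^ ((j : ℤ) ^ 2) - (2:ℝ) ^ (i ^ 2)) ^ (-(1 : ℝ) / (k : ℝ))
      ≤ (1 / 3) * (2:ℝ) ^ (-((i : ℝ) ^ 2) / (k : ℝ)) := by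
  have hg := (hasSum_geometric_of_lt_one (r := (1 / 4 : ℝ)) (by norm_num) (by norm_num)).mul_left
    ((2:ℝ) ^ (-((i : ℝ) ^ 2) / (k : ℝ)) * (1 / 4))
  have hnn : ∀ n : ℕ, 0 ≤
      ((2:ℝ) ^ ((i + 1 + n : ℤ) ^ 2) - (2:ℝ) ^ (i ^ 2)) ^ (-(1 : ℝ) / (k : ℝ)) := by
    intro n
    apply Real.rpow_nonneg
    rw [sub_nonneg]
    apply zpow_le_zpow_right₀ (by norm_num)
    have hn : (0:ℤ) ≤ n := Int.natCast_nonneg n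
    nlinarith
  have hs := Summable.of_nonneg_of_le hnn (term_bound k i hk hi) hg.summable
  refine ⟨(tailEquiv i).summable_iff.1 hs, ?_⟩
  rw [← (tailEquiv i).tsum_eq]
  refine (hs.tsum_le_tsum (term_bound k i hk hi) hg.summable).trans (le_of_eq ?_)
  rw [hg.tsum_eq]
  ring
end

section
/- For each integer j ≥ 1 set x_j = 2^{j²}, r_j = 2^{−j−2}, λ_j = 1 + (2x_j² + 2x_j√(x_j² + r_j²))/r_j², and let M_j ∈ SL(2, ℝ) be the matrix (1/(2·x_j·√λ_j)) · [[x_j(λ_j+1), x_j²(λ_j−1)], [λ_j−1, x_j(λ_j+1)]]. For an integer k ≥ 2, let Γ_k be the subgroup of SL(2, ℝ) generated by {M_j : j ≥ k}, acting on the upper half-plane by Möbius transformations. Then the set of points w ∈ ℂ that are cluster points of the orbit {γ · i : γ ∈ Γ_k} (the orbit of the point i of the upper half-plane, viewed as a subset of ℂ) has Hausdorff dimension at most 1/(2k). -/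
open scoped MatrixGroups UpperHalfPlane

/-- The inverse letter. -/
def schNeg (s : ℕ × Bool) : ℕ × Bool := (s.1, !s.2)

/-- The generator attached to a letter, as a map of the complex plane. -/
noncomputable def schG (c r : ℕ × Bool → ℝ) (s : ℕ × Bool) (z : ℂ) : ℂ :=
  (c s : ℂ) - (r s : ℂ) ^ 2 / (z + c s)

/-- Points of the orbit of `i` whose reduced word starts with a given letter. -/
inductive SchOrb (c r : ℕ × Bool → ℝ) : ℕ × Bool → ℂ → Prop
  | base (s : ℕ × Bool) : SchOrb c r s (schG c r s Complex.I)
  | step (s t : ℕ × Bool) (z : ℂ) : t ≠ schNeg s → SchOrb c r t z →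
      SchOrb c r s (schG c r s z)

structure SchData (c r d : ℕ × Bool → ℝ) : Prop where
  neg_c : ∀ s, c (schNeg s) = - c s
  neg_r : ∀ s, r (schNeg s) = r s
  r_pos : ∀ s, 0 < r s
  r_le_d : ∀ s, r s ≤ d s
  r_le_one : ∀ s, r s ≤ 1
  sep : ∀ s t, t ≠ schNeg s → d s + r t ≤ |c t + c s|
  c_ge : ∀ s, d s ≤ |c s|
  fin : ∀ R : ℝ, {s | |c s| ≤ R}.Finite

section
open Filter Topology

variable {c r d : ℕ × Bool → ℝ}

lemma SchData.d_pos (h : SchData c r d) (s : ℕ × Bool) : 0 < d s :=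
  lt_of_lt_of_le (h.r_pos s) (h.r_le_d s)

lemma SchData.far (h : SchData c r d) {s t : ℕ × Bool} (hst : t ≠ schNeg s) {z : ℂ}
    (hz : ‖z - c t‖ ≤ r t) : d s ≤ ‖z + c s‖ := by
  have h1 := h.sep s t hst
  have h2 : ‖((c t + c s : ℝ) : ℂ)‖ = |c t + c s| := by
    rw [Complex.norm_real, Real.norm_eq_abs]
  have h3 : ((c t + c s : ℝ) : ℂ) = (z + c s) - (z - c t) := by push_cast; ring
  have h4 := norm_sub_le (z + c s) (z - c t)
  rw [← h3, h2] at h4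
  linarith

lemma SchData.far_I (h : SchData c r d) (s : ℕ × Bool) : d s ≤ ‖Complex.I + c s‖ := by
  refine (h.c_ge s).trans ?_
  have := Complex.abs_re_le_norm (Complex.I + c s)
  simpa using this

lemma SchData.G_mem (h : SchData c r d) {s : ℕ × Bool} {z : ℂ} (hz : d s ≤ ‖z + c s‖) :
    ‖schG c r s z - c s‖ ≤ r s := by
  have h1 : schG c r s z - c s = - ((r s : ℂ) ^ 2 / (z + c s)) := by
    unfold schG; ring
  have hp := h.r_pos s
  have hd := h.d_pos s
  rw [h1, norm_neg, norm_div, norm_pow, Complex.norm_real, Real.norm_eq_abs, abs_of_pos hp,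
    div_le_iff₀ (by linarith)]
  have := h.r_le_d s
  nlinarith

lemma SchData.orb_mem (h : SchData c r d) {s : ℕ × Bool} {z : ℂ} (hz : SchOrb c r s z) :
    ‖z - c s‖ ≤ r s := by
  induction hz with
  | base s => exact h.G_mem (h.far_I s)
  | step s t z hst _ ih => exact h.G_mem (h.far hst ih)

lemma SchData.ne_of_far (h : SchData c r d) {s : ℕ × Bool} {z : ℂ} (hz : d s ≤ ‖z + c s‖) :
    z + c s ≠ 0 := by
  intro h0
  rw [h0, norm_zero] at hz
  linarith [h.d_pos s]

/-- The inverse map undoes the generator. -/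
lemma SchData.cancel (h : SchData c r d) {s : ℕ × Bool} {z : ℂ} (_hz : z + c s ≠ 0) :
    schG c r (schNeg s) (schG c r s z) = z := by
  unfold schG
  rw [h.neg_c, h.neg_r]
  have hr : (r s : ℂ) ≠ 0 := by exact_mod_cast (h.r_pos s).ne'
  push_cast
  have : (c s : ℂ) - (r s : ℂ) ^ 2 / (z + c s) + -(c s : ℂ) = - ((r s : ℂ) ^ 2 / (z + c s)) := by
    ring
  rw [this]
  field_simp
  ring

lemma schNeg_schNeg (s : ℕ × Bool) : schNeg (schNeg s) = s := by
  simp [schNeg]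

lemma SchData.orb_ne (h : SchData c r d) {s : ℕ × Bool} {y : ℂ} (hy : SchOrb c r s y) :
    ∃ z : ℂ, z + c s ≠ 0 ∧ y = schG c r s z ∧
      (z = Complex.I ∨ ∃ t, t ≠ schNeg s ∧ SchOrb c r t z) := by
  cases hy with
  | base => exact ⟨_, h.ne_of_far (h.far_I s), rfl, Or.inl rfl⟩
  | step _ t z hst hz =>
    exact ⟨z, h.ne_of_far (h.far hst (h.orb_mem hz)), rfl, Or.inr ⟨t, hst, hz⟩⟩

lemma SchData.orb_mul (h : SchData c r d) (s : ℕ × Bool) {z : ℂ}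
    (hz : z = Complex.I ∨ ∃ t, SchOrb c r t z) :
    schG c r s z = Complex.I ∨ ∃ t, SchOrb c r t (schG c r s z) := by
  rcases hz with rfl | ⟨t, ht⟩
  · exact Or.inr ⟨s, SchOrb.base s⟩
  · by_cases hst : t = schNeg s
    · subst hst
      obtain ⟨y, hy, rfl, hy'⟩ := h.orb_ne ht
      have := h.cancel hy
      rw [schNeg_schNeg] at this
      rw [this]
      rcases hy' with h1 | ⟨t, _, ht'⟩
      · exact Or.inl h1
      · exact Or.inr ⟨t, ht'⟩
    · exact Or.inr ⟨s, SchOrb.step s t z hst ht⟩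

/-- Local finiteness of the family of discs. -/
lemma SchData.acc_union (h : SchData c r d) (T : Set (ℕ × Bool)) {w : ℂ}
    (hw : ∃ᶠ y in 𝓝[≠] w, y = Complex.I ∨ ∃ t ∈ T, SchOrb c r t y) :
    ∃ t ∈ T, AccPt w (𝓟 {y | SchOrb c r t y}) := by
  by_contra! hcon
  apply hw
  have h1 : ∀ᶠ y in 𝓝[≠] w, y ≠ Complex.I := by
    by_cases hwI : w = Complex.I
    · subst hwI; exact self_mem_nhdsWithin
    · exact nhdsWithin_le_nhds (isOpen_ne.mem_nhds hwI)
  have h2 : ∀ᶠ y in 𝓝[≠] w, ‖y - w‖ < 1 := by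
    apply nhdsWithin_le_nhds
    filter_upwards [Metric.ball_mem_nhds w one_pos] with y hy
    simpa [dist_eq_norm] using hy
  have hfin : ({s | |c s| ≤ ‖w‖ + 2} ∩ T).Finite := (h.fin _).subset Set.inter_subset_left
  have h3 : ∀ᶠ y in 𝓝[≠] w, ∀ t ∈ ({s | |c s| ≤ ‖w‖ + 2} ∩ T), ¬ SchOrb c r t y := by
    rw [eventually_all_finite hfin]
    intro t ht
    have := hcon t ht.2
    rw [accPt_iff_frequently_nhdsNE] at this
    simpa using this
  filter_upwards [h1, h2, h3] with y hy1 hy2 hy3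
  rintro (hy | ⟨t, htT, hty⟩)
  · exact hy1 hy
  · refine hy3 t ⟨?_, htT⟩ hty
    have e1 := h.orb_mem hty
    have e2 := h.r_le_one t
    have e3 : ((c t : ℝ) : ℂ) = w + (y - w) - (y - c t) := by ring
    have e4 : |c t| = ‖((c t : ℝ) : ℂ)‖ := by rw [Complex.norm_real, Real.norm_eq_abs]
    have e5 := norm_sub_le (w + (y - w)) (y - c t)
    have e6 := norm_add_le w (y - w)
    rw [← e3, ← e4] at e5
    show |c t| ≤ ‖w‖ + 2
    linarith

lemma SchData.acc_mem (h : SchData c r d) {s : ℕ × Bool} {w : ℂ}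
    (hw : AccPt w (𝓟 {y | SchOrb c r s y})) : w ∈ Metric.closedBall (c s : ℂ) (r s) := by
  have h1 : w ∈ closure {y | SchOrb c r s y} := mem_closure_iff_clusterPt.2 hw.clusterPt
  refine closure_minimal ?_ Metric.isClosed_closedBall h1
  intro y hy
  rw [Metric.mem_closedBall, dist_eq_norm]
  exact h.orb_mem hy

lemma SchData.acc_step (h : SchData c r d) {s : ℕ × Bool} {w : ℂ}
    (hw : AccPt w (𝓟 {y | SchOrb c r s y})) :
    w = c s ∨ ∃ t, t ≠ schNeg s ∧ ∃ v, AccPt v (𝓟 {y | SchOrb c r t y}) ∧ w = schG c r s v := by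
  by_cases hwc : w = c s
  · exact Or.inl hwc
  right
  have hwc' : w + c (schNeg s) ≠ 0 := by
    rw [h.neg_c]; push_cast; rw [← sub_eq_add_neg]; exact sub_ne_zero.2 hwc
  have hinv := h.cancel hwc'
  rw [schNeg_schNeg] at hinv
  set F := schG c r (schNeg s) with hF
  have hcont : ContinuousAt F w := by
    rw [hF]; unfold schG
    exact continuousAt_const.sub (continuousAt_const.div (by fun_prop) hwc')
  have htend : Tendsto F (𝓝[≠] w) (𝓝[≠] (F w)) := by
    refine tendsto_nhdsWithin_iff.2 ⟨hcont.tendsto.mono_left nhdsWithin_le_nhds, ?_⟩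
    have : ∀ᶠ y in 𝓝[≠] w, y ≠ (c s : ℂ) := nhdsWithin_le_nhds (isOpen_ne.mem_nhds hwc)
    filter_upwards [this, self_mem_nhdsWithin] with y hy hyw
    intro heq
    apply hyw
    have hy' : y + c (schNeg s) ≠ 0 := by
      rw [h.neg_c]; push_cast; rw [← sub_eq_add_neg]; exact sub_ne_zero.2 hy
    have := h.cancel hy'
    rw [schNeg_schNeg] at this
    rw [Set.mem_singleton_iff] at heq
    rw [← hF, heq, hinv] at this
    exact this.symm
  rw [accPt_iff_frequently_nhdsNE] at hw
  have hfr := htend.frequently_map (q := fun z => z = Complex.I ∨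
    ∃ t ∈ {t | t ≠ schNeg s}, SchOrb c r t z) F (fun y hy => by
      obtain ⟨z, hz, rfl, hz'⟩ := h.orb_ne hy
      rw [hF, h.cancel hz]
      exact hz') hw
  obtain ⟨t, ht, hacc⟩ := h.acc_union _ hfr
  exact ⟨t, ht, F w, hacc, hinv.symm⟩

open scoped NNReal ENNReal

lemma SchData.lip (h : SchData c r d) {s t : ℕ × Bool} (hst : t ≠ schNeg s) {κ : ℝ≥0}
    (hκ : (r s / d s) ^ 2 ≤ κ) :
    LipschitzOnWith κ (schG c r s) (Metric.closedBall (c t : ℂ) (r t)) := by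
  refine LipschitzOnWith.of_dist_le_mul ?_
  intro z hz z' hz'
  rw [Metric.mem_closedBall, dist_eq_norm] at hz hz'
  have f1 := h.far hst hz
  have f2 := h.far hst hz'
  have n1 := h.ne_of_far f1
  have n2 := h.ne_of_far f2
  have hd := h.d_pos s
  have : schG c r s z - schG c r s z' = (r s : ℂ) ^ 2 / ((z + c s) * (z' + c s)) * (z - z') := by
    unfold schG; field_simp; ring
  rw [dist_eq_norm, dist_eq_norm, this, norm_mul]
  refine mul_le_mul_of_nonneg_right (le_trans ?_ hκ) (norm_nonneg _)
  rw [norm_div, norm_mul, norm_pow, Complex.norm_real, Real.norm_eq_abs, sq_abs, div_pow, sq (d s)]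
  gcongr

lemma SchData.cover (h : SchData c r d) {κ : ℕ × Bool → ℝ≥0}
    (hκ : ∀ s, (r s / d s) ^ 2 ≤ κ s) (hκ2 : ∀ s, κ s ≤ 1 / 2) {α : ℝ} (hα : 0 < α)
    (hsum : ∑' s, (κ s : ℝ≥0∞) ^ α ≤ 1 / 2) (n : ℕ) :
    ∃ b : ℕ × Bool → ℝ≥0∞, ∑' s, b s ≤ (1 / 2) ^ n * ∑' s, (ENNReal.ofReal (2 * r s)) ^ α ∧
    ∀ s, ∃ U : ℕ → Set ℂ, {w | AccPt w (𝓟 {y | SchOrb c r s y})} ⊆ ⋃ i, U i ∧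
      (∀ i, Metric.ediam (U i) ≤ (1 / 2) ^ n * 2) ∧ ∑' i, Metric.ediam (U i) ^ α ≤ b s := by
  induction n with
  | zero =>
    refine ⟨fun s => (ENNReal.ofReal (2 * r s)) ^ α, by simp, fun s => ?_⟩
    have hdiam : Metric.ediam (Metric.closedBall (c s : ℂ) (r s)) ≤ ENNReal.ofReal (2 * r s) := by
      rw [← Metric.closedEBall_ofReal (h.r_pos s).le, ENNReal.ofReal_mul (by norm_num)]
      simpa using Metric.ediam_closedEBall_le (x := (c s : ℂ)) (r := ENNReal.ofReal (r s))
    refine ⟨fun i => if i = 0 then Metric.closedBall (c s : ℂ) (r s) else ∅, ?_, ?_, ?_⟩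
    · intro w hw
      exact Set.mem_iUnion.2 ⟨0, by simpa using h.acc_mem hw⟩
    · intro i
      by_cases hi : i = 0
      · simp only [hi, if_true, pow_zero, one_mul]
        refine hdiam.trans ?_
        rw [show (2 : ℝ≥0∞) = ENNReal.ofReal 2 by simp]
        exact ENNReal.ofReal_le_ofReal (by linarith [h.r_le_one s])
      · simp [hi]
    · rw [tsum_eq_single 0]
      · simp only [if_true]
        exact ENNReal.rpow_le_rpow hdiam hα.le
      · intro i hi
        simp [hi, hα]
  | succ n ih =>
    obtain ⟨b, hb, hU⟩ := ih
    choose U hU1 hU2 hU3 using hU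
    refine ⟨fun s => (κ s : ℝ≥0∞) ^ α * ∑' t, b t, ?_, fun s => ?_⟩
    · rw [ENNReal.tsum_mul_right, pow_succ', mul_assoc]
      exact mul_le_mul' hsum hb
    let V : Option ((ℕ × Bool) × ℕ) → Set ℂ := fun o => match o with
      | none => {(c s : ℂ)}
      | some p => if p.1 = schNeg s then ∅ else
          schG c r s '' (U p.1 p.2 ∩ Metric.closedBall (c p.1 : ℂ) (r p.1))
    have hV : ∀ p : (ℕ × Bool) × ℕ, Metric.ediam (V (some p)) ≤
        κ s * Metric.ediam (U p.1 p.2) := by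
      intro p
      by_cases hp : p.1 = schNeg s
      · simp [V, hp]
      · simp only [V, hp, if_false]
        refine (Metric.ediam_image_le_iff).2 ?_
        intro x hx y hy
        exact ((h.lip hp (hκ s)) hx.2 hy.2).trans
          (mul_le_mul' le_rfl (Metric.edist_le_ediam_of_mem hx.1 hy.1))
    obtain ⟨e⟩ : Nonempty (ℕ ≃ Option ((ℕ × Bool) × ℕ)) :=
      nonempty_equiv_of_countable
    refine ⟨fun i => V (e i), ?_, ?_, ?_⟩
    · intro w hw
      rcases h.acc_step hw with rfl | ⟨t, ht, v, hv, rfl⟩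
      · exact Set.mem_iUnion.2 ⟨e.symm none, by simp [V]⟩
      · obtain ⟨i, hi⟩ := Set.mem_iUnion.1 (hU1 t hv)
        refine Set.mem_iUnion.2 ⟨e.symm (some (t, i)), ?_⟩
        simp only [Equiv.apply_symm_apply, V, ht, if_false]
        exact ⟨v, ⟨hi, h.acc_mem hv⟩, rfl⟩
    · intro i
      show Metric.ediam (V (e i)) ≤ _
      generalize e i = o
      rcases o with _ | p
      · simp [V]
      · refine (hV p).trans ?_
        rw [pow_succ', mul_assoc]
        refine mul_le_mul' ?_ (hU2 _ _)
        have := hκ2 s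
        have h2 : ((κ s : ℝ≥0) : ℝ≥0∞) ≤ ((1 / 2 : ℝ≥0) : ℝ≥0∞) := by exact_mod_cast this
        refine h2.trans (le_of_eq ?_)
        rw [ENNReal.coe_div (by norm_num)]; simp
    · rw [e.tsum_eq (fun o => Metric.ediam (V o) ^ α)]
      have h0 : Metric.ediam (V none) ^ α = 0 := by simp [V, hα]
      rw [← (Option.some_injective _).tsum_eq (f := fun o => Metric.ediam (V o) ^ α)
        (by
          intro o ho
          rcases o with _ | p
          · exact absurd h0 ho
          · exact ⟨p, rfl⟩)]
      calc ∑' p, Metric.ediam (V (some p)) ^ α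
          ≤ ∑' p : (ℕ × Bool) × ℕ, (κ s : ℝ≥0∞) ^ α * Metric.ediam (U p.1 p.2) ^ α := by
            refine ENNReal.tsum_le_tsum fun p => ?_
            rw [← ENNReal.mul_rpow_of_nonneg _ _ hα.le]
            exact ENNReal.rpow_le_rpow (hV p) hα.le
        _ = (κ s : ℝ≥0∞) ^ α * ∑' t, ∑' i, Metric.ediam (U t i) ^ α := by
            rw [ENNReal.tsum_mul_left, ENNReal.tsum_prod']
        _ ≤ _ := by
            exact mul_le_mul' le_rfl (ENNReal.tsum_le_tsum hU3)

lemma SchData.dim (h : SchData c r d) {κ : ℕ × Bool → ℝ≥0}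
    (hκ : ∀ s, (r s / d s) ^ 2 ≤ κ s) (hκ2 : ∀ s, κ s ≤ 1 / 2) {α : ℝ≥0} (hα : 0 < α)
    (hsum : ∑' s, (κ s : ℝ≥0∞) ^ (α : ℝ) ≤ 1 / 2)
    (hB : ∑' s, (ENNReal.ofReal (2 * r s)) ^ (α : ℝ) ≠ ∞) (A : Set ℂ)
    (hA : ∀ z ∈ A, z = Complex.I ∨ ∃ t, SchOrb c r t z) :
    dimH {w : ℂ | AccPt w (𝓟 A)} ≤ α := by
  apply dimH_le_of_hausdorffMeasure_ne_top
  choose b hb hU using h.cover hκ hκ2 (NNReal.coe_pos.2 hα) hsum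
  choose U hU1 hU2 hU3 using hU
  have h12 : (1 / 2 : ℝ≥0∞) < 1 := by
    rw [one_div]; exact ENNReal.inv_lt_one.2 (by norm_num)
  have key := MeasureTheory.Measure.hausdorffMeasure_le_liminf_tsum (α : ℝ)
    {w : ℂ | AccPt w (𝓟 A)} (l := atTop) (fun n : ℕ => (1 / 2 : ℝ≥0∞) ^ n * 2)
    (by
      have := ENNReal.Tendsto.mul_const (b := 2) (ENNReal.tendsto_pow_atTop_nhds_zero_of_lt_one h12)
        (Or.inr (by norm_num))
      simpa using this)
    (fun n (p : (ℕ × Bool) × ℕ) => U n p.1 p.2)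
    (Eventually.of_forall fun n p => hU2 _ _ _)
    (Eventually.of_forall fun n w hw => by
      have hw' : AccPt w (𝓟 A) := hw
      rw [accPt_iff_frequently_nhdsNE] at hw'
      obtain ⟨t, -, ht⟩ := h.acc_union Set.univ (w := w) (hw'.mono fun y hy => by
        simpa using hA y hy)
      obtain ⟨i, hi⟩ := Set.mem_iUnion.1 (hU1 n t ht)
      exact Set.mem_iUnion.2 ⟨(t, i), hi⟩)
  refine ne_top_of_le_ne_top hB (key.trans ?_)
  refine liminf_le_of_le (by isBoundedDefault) ?_
  intro x hx
  obtain ⟨n, hn⟩ := hx.exists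
  refine hn.trans ?_
  rw [ENNReal.tsum_prod']
  refine (ENNReal.tsum_le_tsum fun t => hU3 n t).trans ((hb n).trans ?_)
  exact mul_le_of_le_one_left zero_le (pow_le_one₀ zero_le h12.le)

end

section
open Filter Topology
open scoped NNReal ENNReal

/-- Numerical data: centre of the disc attached to a letter. -/
noncomputable def schC (k : ℕ) (x r : ℕ → ℝ) (s : ℕ × Bool) : ℝ :=
  if s.2 then Real.sqrt (x (s.1 + k) ^ 2 + r (s.1 + k) ^ 2)
  else - Real.sqrt (x (s.1 + k) ^ 2 + r (s.1 + k) ^ 2)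

lemma sch_r_eq (j : ℕ) : (2 : ℝ) ^ (-(j : ℤ) - 2) = (1 / 2) ^ (j + 2) := by
  rw [show (-(j : ℤ) - 2) = -((j + 2 : ℕ) : ℤ) by push_cast; ring, zpow_neg, zpow_natCast,
    one_div, inv_pow]

lemma sch_data (x r : ℕ → ℝ)
    (hx : ∀ j : ℕ, 1 ≤ j → x j = 2 ^ (j ^ 2))
    (hr : ∀ j : ℕ, 1 ≤ j → r j = (2:ℝ) ^ (-(j : ℤ) - 2)) (k : ℕ) (hk : 2 ≤ k) :
    SchData (schC k x r) (fun s => r (s.1 + k)) (fun s => x (s.1 + k) / 2) := by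
  have rpos : ∀ n, 0 < r (n + k) := fun n => by
    rw [hr _ (by omega)]; positivity
  have rle : ∀ n, r (n + k) ≤ 1 / 16 := fun n => by
    rw [hr _ (by omega), sch_r_eq]
    calc (1 / 2 : ℝ) ^ (n + k + 2) ≤ (1 / 2) ^ 4 :=
          pow_le_pow_of_le_one (by norm_num) (by norm_num) (by omega)
      _ = 1 / 16 := by norm_num
  have xge : ∀ n, 16 ≤ x (n + k) := fun n => by
    rw [hx _ (by omega)]
    calc (16 : ℝ) = 2 ^ 4 := by norm_num
      _ ≤ 2 ^ ((n + k) ^ 2) := by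
        apply pow_le_pow_right₀ (by norm_num)
        have : 2 ≤ n + k := by omega
        nlinarith
  have xgrow : ∀ m n, m < n → 4 * x (m + k) ≤ x (n + k) := fun m n hmn => by
    rw [hx _ (by omega), hx _ (by omega)]
    calc (4 : ℝ) * 2 ^ ((m + k) ^ 2) = 2 ^ ((m + k) ^ 2 + 2) := by rw [pow_add]; ring
      _ ≤ 2 ^ ((n + k) ^ 2) := by
        apply pow_le_pow_right₀ (by norm_num)
        nlinarith
  have Cge : ∀ n, x (n + k) ≤ √(x (n + k) ^ 2 + r (n + k) ^ 2) := fun n =>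
    Real.le_sqrt_of_sq_le (by nlinarith [rpos n])
  have Cle : ∀ n, √(x (n + k) ^ 2 + r (n + k) ^ 2) ≤ x (n + k) + r (n + k) := fun n => by
    have := rpos n
    have := xge n
    exact Real.sqrt_le_iff.2 ⟨by linarith, by nlinarith⟩
  have absC : ∀ s : ℕ × Bool, |schC k x r s| = √(x (s.1 + k) ^ 2 + r (s.1 + k) ^ 2) := by
    rintro ⟨n, b⟩
    cases b <;> simp [schC, abs_of_nonneg (Real.sqrt_nonneg _)]
  refine ⟨?_, ?_, ?_, ?_, ?_, ?_, ?_, ?_⟩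
  · rintro ⟨n, b⟩
    cases b <;> simp [schC, schNeg]
  · rintro ⟨n, b⟩; rfl
  · intro s; exact rpos _
  · intro s
    have := rle s.1
    have := xge s.1
    show r (s.1 + k) ≤ x (s.1 + k) / 2
    linarith
  · intro s
    have := rle s.1
    show r (s.1 + k) ≤ 1
    linarith
  · rintro ⟨n, b⟩ ⟨m, b'⟩ hne
    show x (n + k) / 2 + r (m + k) ≤ _
    have r1 := rle n
    have r2 := rle m
    have x1 := xge n
    have x2 := xge m
    have c1 := Cge n
    have c2 := Cge m
    have d1 := Cle n
    have d2 := Cle m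
    have a1 := absC (n, b)
    have a2 := absC (m, b')
    simp only at a1 a2
    rcases lt_trichotomy m n with hmn | rfl | hmn
    · have g := xgrow _ _ hmn
      have := abs_sub_abs_le_abs_sub (schC k x r (n, b)) (-schC k x r (m, b'))
      rw [abs_neg, a1, a2, sub_neg_eq_add, add_comm (schC k x r (n, b))] at this
      linarith
    · have : b' = b := by
        by_contra hb
        apply hne
        cases b <;> cases b' <;> simp_all [schNeg]
      subst this
      rw [← two_mul, abs_mul, a1, abs_two]
      linarith
    · have g := xgrow _ _ hmn
      have := abs_sub_abs_le_abs_sub (schC k x r (m, b')) (-schC k x r (n, b))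
      rw [abs_neg, a1, a2, sub_neg_eq_add] at this
      linarith
  · intro s
    rw [absC]
    have := Cge s.1
    have := xge s.1
    show x (s.1 + k) / 2 ≤ _
    linarith
  · intro R
    refine Set.Finite.subset ((Set.finite_Iic ⌈R⌉₊).prod (Set.finite_univ (α := Bool))) ?_
    rintro ⟨n, b⟩ hs
    have hs' : |schC k x r (n, b)| ≤ R := hs
    rw [absC] at hs'
    refine ⟨?_, trivial⟩
    show n ≤ ⌈R⌉₊
    have h1 : (n : ℝ) ≤ x (n + k) := by
      rw [hx _ (by omega)]
      have : n ≤ 2 ^ ((n + k) ^ 2) :=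
        (Nat.lt_two_pow_self (n := n)).le.trans (Nat.pow_le_pow_right (by norm_num) (by nlinarith))
      exact_mod_cast this
    have h2 : (n : ℝ) ≤ R := h1.trans ((Cge n).trans hs')
    exact_mod_cast h2.trans (Nat.le_ceil R)

lemma sch_action (X R L : ℝ) (hX : 0 < X) (hR : 0 < R)
    (hL : L = 1 + (2 * X ^ 2 + 2 * X * √(X ^ 2 + R ^ 2)) / R ^ 2) (A : SL(2, ℝ))
    (hA : (A : Matrix (Fin 2) (Fin 2) ℝ) = (1 / (2 * X * √L)) •
        !![X * (L + 1), X ^ 2 * (L - 1); L - 1, X * (L + 1)]) (z : ℍ) :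
    ((A • z : ℍ) : ℂ) = (√(X ^ 2 + R ^ 2) : ℂ) - (R : ℂ) ^ 2 / (z + (√(X ^ 2 + R ^ 2) : ℝ)) := by
  have hC2 : √(X ^ 2 + R ^ 2) ^ 2 = X ^ 2 + R ^ 2 := Real.sq_sqrt (by positivity)
  have hCp : 0 < √(X ^ 2 + R ^ 2) := Real.sqrt_pos.2 (by positivity)
  set C := √(X ^ 2 + R ^ 2) with hC
  set l := L - 1 with hl
  have hlpos : 0 < l := by rw [hl, hL]; simp only [add_sub_cancel_left]; positivity
  have hlv : l * R ^ 2 = 2 * X ^ 2 + 2 * X * C := by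
    rw [hl, hL]; field_simp; ring
  have e1 : X * (L + 1) = C * l := by
    have : R ^ 2 ≠ 0 := by positivity
    apply mul_right_cancel₀ this
    have : L + 1 = l + 2 := by rw [hl]; ring
    rw [this]
    linear_combination (X - C) * hlv - (2 * X) * hC2
  have hLp : 0 < L := by linarith
  set q := 1 / (2 * X * √L) with hq
  have hqp : 0 < q := by rw [hq]; have := Real.sqrt_pos.2 hLp; positivity
  have a00 : A 0 0 = q * (C * l) := by
    have := congrFun (congrFun hA 0) 0; simpa [e1] using this
  have a01 : A 0 1 = q * (X ^ 2 * l) := by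
    have := congrFun (congrFun hA 0) 1; simpa [e1] using this
  have a10 : A 1 0 = q * l := by
    have := congrFun (congrFun hA 1) 0; simpa [e1] using this
  have a11 : A 1 1 = q * (C * l) := by
    have := congrFun (congrFun hA 1) 1; simpa [e1] using this
  rw [UpperHalfPlane.coe_specialLinearGroup_apply, a00, a01, a10, a11]
  have hz : (z : ℂ) + C ≠ 0 := by
    intro h0
    have := congrArg Complex.im h0
    have hp := z.im_pos
    simp at this
    linarith
  have hqc : (q : ℂ) ≠ 0 := by exact_mod_cast hqp.ne'
  have hlc : (l : ℂ) ≠ 0 := by exact_mod_cast hlpos.ne'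
  have hC2c : (C : ℂ) ^ 2 = (X : ℂ) ^ 2 + (R : ℂ) ^ 2 := by exact_mod_cast hC2
  simp only [Algebra.algebraMap_self, RingHom.id_apply]
  push_cast
  have hden : (q : ℂ) * l * z + q * (C * l) = q * l * (z + C) := by ring
  rw [hden]
  have hnum : (q : ℂ) * (C * l) * z + q * (X ^ 2 * l) = q * l * (C * z + X ^ 2) := by ring
  rw [hnum, mul_div_mul_left _ _ (mul_ne_zero hqc hlc), eq_sub_iff_add_eq, ← add_div,
    div_eq_iff hz]
  linear_combination - hC2c

end

section
open Filter Topology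
open scoped NNReal ENNReal

lemma sch_tsum (f : ℕ → ENNReal) : ∑' s : ℕ × Bool, f s.1 = 2 * ∑' n, f n := by
  rw [ENNReal.tsum_prod' (f := fun s : ℕ × Bool => f s.1), ← ENNReal.tsum_mul_left]
  refine tsum_congr fun n => ?_
  rw [tsum_fintype]
  simp [two_mul]

end

theorem limit_set_dimension_bound
    (x r lam : ℕ → ℝ)
    (hx : ∀ j : ℕ, 1 ≤ j → x j = 2 ^ (j ^ 2))
    (hr : ∀ j : ℕ, 1 ≤ j → r j = (2:ℝ) ^ (-(j : ℤ) - 2))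
    (hlam : ∀ j : ℕ, 1 ≤ j →
      lam j = 1 + (2 * (x j) ^ 2 + 2 * x j * Real.sqrt ((x j) ^ 2 + (r j) ^ 2)) / (r j) ^ 2)
    (M : ℕ → SL(2, ℝ))
    (hM : ∀ j : ℕ, 1 ≤ j → ((M j : Matrix (Fin 2) (Fin 2) ℝ)) =
      (1 / (2 * x j * Real.sqrt (lam j))) •
        !![x j * (lam j + 1), (x j) ^ 2 * (lam j - 1);
           lam j - 1, x j * (lam j + 1)])
    (k : ℕ) (hk : 2 ≤ k)
    (Γk : Subgroup SL(2, ℝ)) (hΓk : Γk = Subgroup.closure {g : SL(2, ℝ) | ∃ j ≥ k, g = M j}) :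
    dimH {w : ℂ | AccPt w (Filter.principal
        {z : ℂ | ∃ γ ∈ Γk, z = ((γ • UpperHalfPlane.I : ℍ) : ℂ)})}
      ≤ ENNReal.ofReal (1 / (2 * k)) := by
  have h := sch_data x r hx hr k hk
  have hk0 : (0 : ℝ) < 1 / (2 * k) := by
    have : (0 : ℝ) < k := by exact_mod_cast (by omega : 0 < k)
    positivity
  have hpos : ∀ z : ℍ, ∀ a : ℝ, (z : ℂ) + a ≠ 0 := by
    intro z a h0
    have := congrArg Complex.im h0
    have hp := z.im_pos
    simp at this
    linarith
  have act : ∀ n (z : ℍ), ((M (n + k) • z : ℍ) : ℂ) =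
      schG (schC k x r) (fun s => r (s.1 + k)) (n, true) z := by
    intro n z
    have := sch_action (x (n + k)) (r (n + k)) (lam (n + k))
      (by rw [hx _ (by omega)]; positivity) (by rw [hr _ (by omega)]; positivity)
      (hlam _ (by omega)) (M (n + k)) (hM _ (by omega)) z
    rw [this]
    simp [schG, schC]
  have act' : ∀ n (z : ℍ), (((M (n + k))⁻¹ • z : ℍ) : ℂ) =
      schG (schC k x r) (fun s => r (s.1 + k)) (n, false) z := by
    intro n z
    have h1 := act n ((M (n + k))⁻¹ • z)
    rw [smul_inv_smul] at h1
    rw [h1]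
    exact (h.cancel (s := (n, true)) (hpos _ _)).symm
  have horb : ∀ γ ∈ Γk, ((γ • UpperHalfPlane.I : ℍ) : ℂ) = Complex.I ∨
      ∃ t, SchOrb (schC k x r) (fun s => r (s.1 + k)) t ((γ • UpperHalfPlane.I : ℍ) : ℂ) := by
    intro γ hγ
    rw [hΓk] at hγ
    induction hγ using Subgroup.closure_induction_left with
    | one => left; simp
    | mul_left g hg y _ ih =>
      obtain ⟨j, hj, rfl⟩ := hg
      obtain ⟨n, rfl⟩ := Nat.exists_eq_add_of_le' hj
      rw [mul_smul, act]
      exact h.orb_mul _ ih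
    | inv_mul_cancel g hg y _ ih =>
      obtain ⟨j, hj, rfl⟩ := hg
      obtain ⟨n, rfl⟩ := Nat.exists_eq_add_of_le' hj
      rw [mul_smul, act']
      exact h.orb_mul _ ih
  have hcoe : ((Real.toNNReal (1 / (2 * k)) : NNReal) : ℝ) = 1 / (2 * k) :=
    Real.coe_toNNReal _ hk0.le
  refine h.dim (κ := fun s => (1 / 2) ^ (2 * (s.1 + k) ^ 2 + 2 * (s.1 + k) + 2))
    (α := Real.toNNReal (1 / (2 * k))) ?_ ?_ (Real.toNNReal_pos.2 hk0) ?_ ?_ _ ?_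
  · intro s
    show (r (s.1 + k) / (x (s.1 + k) / 2)) ^ 2 ≤ _
    rw [hx _ (by omega), hr _ (by omega), sch_r_eq]
    generalize s.1 + k = j
    apply le_of_eq
    push_cast
    rw [show 2 * j ^ 2 + 2 * j + 2 = j ^ 2 * 2 + j * 2 + 2 by ring]
    simp only [pow_add, pow_mul]
    simp only [one_div, inv_pow]
    field_simp
  · intro s
    calc (1 / 2 : NNReal) ^ (2 * (s.1 + k) ^ 2 + 2 * (s.1 + k) + 2) ≤ (1 / 2) ^ 1 :=
          pow_le_pow_of_le_one zero_le (by norm_num) (by omega)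
      _ = 1 / 2 := pow_one _
  · rw [hcoe]
    have hle : ∀ s : ℕ × Bool, (((1 / 2 : NNReal) ^ (2 * (s.1 + k) ^ 2 + 2 * (s.1 + k) + 2) : NNReal) :
        ENNReal) ^ (1 / (2 * k : ℝ)) ≤ (1 / 8) * (2⁻¹ : ENNReal) ^ s.1 := by
      intro s
      have hb : (((1 / 2 : NNReal) : NNReal) : ENNReal) = 2⁻¹ := by
        rw [one_div, ENNReal.coe_inv (by norm_num)]; rfl
      have h21 : (2⁻¹ : ENNReal) ≤ 1 := ENNReal.inv_le_one.2 (by norm_num)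
      have e1 : (((1 / 2 : NNReal) ^ (2 * (s.1 + k) ^ 2 + 2 * (s.1 + k) + 2) : NNReal) : ENNReal) ≤
          ((2⁻¹ : ENNReal) ^ (3 + s.1)) ^ (2 * k) := by
        rw [ENNReal.coe_pow, hb, ← pow_mul]
        apply pow_le_pow_of_le_one zero_le h21
        nlinarith
      refine (ENNReal.rpow_le_rpow e1 hk0.le).trans ?_
      have h2k : (2 * k : ℝ) ≠ 0 := by
        have : (0 : ℝ) < k := by exact_mod_cast (by omega : 0 < k)
        positivity
      rw [← ENNReal.rpow_natCast, ← ENNReal.rpow_mul]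
      have : ((2 * k : ℕ) : ℝ) * (1 / (2 * k : ℝ)) = 1 := by
        push_cast; field_simp
      rw [this, ENNReal.rpow_one, pow_add]
      refine mul_le_mul' (le_of_eq ?_) le_rfl
      rw [← ENNReal.inv_pow, one_div]; norm_num
    refine (ENNReal.tsum_le_tsum hle).trans ?_
    rw [sch_tsum (fun n => (1 / 8) * (2⁻¹ : ENNReal) ^ n), ENNReal.tsum_mul_left,
      ENNReal.tsum_geometric_two]
    apply le_of_eq
    rw [← ENNReal.toReal_eq_toReal_iff' (by finiteness) (by finiteness)]
    simp
    norm_num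
  · rw [hcoe]
    have hle : ∀ s : ℕ × Bool, ENNReal.ofReal (2 * r (s.1 + k)) ^ (1 / (2 * k : ℝ)) ≤
        ((2⁻¹ : ENNReal) ^ (1 / (2 * k : ℝ))) ^ s.1 := by
      intro s
      have e1 : ENNReal.ofReal (2 * r (s.1 + k)) ≤ (2⁻¹ : ENNReal) ^ s.1 := by
        have : (2⁻¹ : ENNReal) = ENNReal.ofReal (1 / 2) := by
          rw [one_div, ENNReal.ofReal_inv_of_pos (by norm_num)]; simp
        rw [this, ← ENNReal.ofReal_pow (by norm_num)]
        apply ENNReal.ofReal_le_ofReal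
        rw [hr _ (by omega), sch_r_eq, pow_succ']
        calc 2 * (1 / 2 * (1 / 2 : ℝ) ^ (s.1 + k + 1)) = (1 / 2) ^ (s.1 + k + 1) := by ring
          _ ≤ _ := pow_le_pow_of_le_one (by norm_num) (by norm_num) (by omega)
      refine (ENNReal.rpow_le_rpow e1 hk0.le).trans (le_of_eq ?_)
      rw [← ENNReal.rpow_natCast, ← ENNReal.rpow_natCast, ← ENNReal.rpow_mul, ← ENNReal.rpow_mul,
        mul_comm]
    refine ne_top_of_le_ne_top ?_ (ENNReal.tsum_le_tsum hle)
    rw [sch_tsum (fun n => ((2⁻¹ : ENNReal) ^ (1 / (2 * k : ℝ))) ^ n), ENNReal.tsum_geometric]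
    have hlt : (2⁻¹ : ENNReal) ^ (1 / (2 * k : ℝ)) < 1 :=
      ENNReal.rpow_lt_one (ENNReal.inv_lt_one.2 (by norm_num)) hk0
    exact ENNReal.mul_ne_top (by norm_num) (ENNReal.inv_ne_top.2 (tsub_pos_of_lt hlt).ne')
  · rintro z ⟨γ, hγ, rfl⟩
    exact horb γ hγ
end
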